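/- For every integer T ≥ 1 (with d = 1), all constants c_2, …, c_T ≥ 0, and every ε > 0, there exist a measurable weighting function w : ℝ^T → [0, ∞), measurable maps w_t : ℝ^t → [0, ∞) for t = 1, …, T with w_T = w, and Borel probability measures μ, ν on ℝ^T with ∫ w dμ + ∫ w dν < ∞, such that: (a) for ν-almost every x and every t = 2, …, T, w_{t−1}(x_{1:t−1}) ≤ w_t(x_{1:t}) and ∫ w_t(x_{1:t−1}, x̃_t) ν_{x_{1:t−1}}(dx̃_t) ≤ (1 + c_t) · w_{t−1}(x_{1:t−1}); (b) 0 < TV_w(μ, ν) < ∞; and (c) ATV_w(μ, ν) ≥ (1 + 2 Σ_{t=1}^{T−1} ∏_{s=t+1}^{T} (1 + c_s) − ε) · TV_w(μ, ν). Hence the constant 1 + 2 Σ_{t=1}^{T−1} ∏_{s=t+1}^{T}(1 + c_s) in the weighted bound ATV_w ≤ (1 + 2 Σ∏(1 + c_s)) · TV_w is sharp. -/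

import Mathlib

open MeasureTheory ProbabilityTheory
open scoped ENNReal

noncomputable section

/-- The path space `ℝ^{dT}`: `T` time steps with state space `ℝ^d`. -/
abbrev Traj (d T : ℕ) : Type := Fin T → Fin d → ℝ

/-- Restriction of a path to its first `t` coordinates. -/
def restr (d : ℕ) {t T : ℕ} (h : t ≤ T) (x : Traj d T) : Traj d t :=
  fun i => x (Fin.castLE h i)

lemma measurable_restr (d : ℕ) {t T : ℕ} (h : t ≤ T) : Measurable (restr d h) :=
  measurable_pi_lambda _ (fun i => measurable_pi_apply _)

/-- σ-algebra generated by the first `t` coordinates of the first component. -/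
def sigmaX (d T : ℕ) {t : ℕ} (h : t ≤ T) : MeasurableSpace (Traj d T × Traj d T) :=
  MeasurableSpace.comap (fun ω => restr d h ω.1) inferInstance

/-- σ-algebra generated by the first `t` coordinates of the second component. -/
def sigmaY (d T : ℕ) {t : ℕ} (h : t ≤ T) : MeasurableSpace (Traj d T × Traj d T) :=
  MeasurableSpace.comap (fun ω => restr d h ω.2) inferInstance

lemma sigmaX_le (d T : ℕ) {t : ℕ} (h : t ≤ T) :
    sigmaX d T h ≤ (inferInstance : MeasurableSpace (Traj d T × Traj d T)) :=
  ((measurable_restr d h).comp measurable_fst).comap_le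

lemma sigmaY_le (d T : ℕ) {t : ℕ} (h : t ≤ T) :
    sigmaY d T h ≤ (inferInstance : MeasurableSpace (Traj d T × Traj d T)) :=
  ((measurable_restr d h).comp measurable_snd).comap_le

/-- A coupling `π` of two laws on the path space is *bicausal* if for each `t < T`,
`σ(Y_1,…,Y_t)` is conditionally independent of `σ(X_1,…,X_T)` given `σ(X_1,…,X_t)`, and
symmetrically. -/
def IsBicausal (d T : ℕ) (π : Measure (Traj d T × Traj d T)) [IsFiniteMeasure π] : Prop :=
  ∀ t, 1 ≤ t → ∀ h : t + 1 ≤ T,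
    CondIndep (sigmaX d T (Nat.le_of_succ_le h)) (sigmaY d T (Nat.le_of_succ_le h))
      (sigmaX d T (le_refl T)) (sigmaX_le d T (Nat.le_of_succ_le h)) π ∧
    CondIndep (sigmaY d T (Nat.le_of_succ_le h)) (sigmaX d T (Nat.le_of_succ_le h))
      (sigmaY d T (le_refl T)) (sigmaY_le d T (Nat.le_of_succ_le h)) π

/-- The set of couplings of `μ` and `ν`. -/
def Cpl {α : Type*} [MeasurableSpace α] (μ ν : Measure α) : Set (Measure (α × α)) :=
  {π | IsProbabilityMeasure π ∧ π.map Prod.fst = μ ∧ π.map Prod.snd = ν}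

/-- The set of bicausal couplings of `μ` and `ν`. -/
def BCpl {d T : ℕ} (μ ν : Measure (Traj d T)) : Set (Measure (Traj d T × Traj d T)) :=
  {π | π ∈ Cpl μ ν ∧ ∃ _ : IsFiniteMeasure π, IsBicausal d T π}

/-- Weighted total variation distance. -/
def TVw {d T : ℕ} (w : Traj d T → ℝ) (μ ν : Measure (Traj d T)) : ℝ≥0∞ :=
  ⨅ π ∈ Cpl μ ν, ∫⁻ q in {q : Traj d T × Traj d T | q.1 ≠ q.2},
    (ENNReal.ofReal (w q.1) + ENNReal.ofReal (w q.2)) ∂π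

/-- Weighted adapted total variation distance. -/
def ATVw {d T : ℕ} (w : Traj d T → ℝ) (μ ν : Measure (Traj d T)) : ℝ≥0∞ :=
  ⨅ π ∈ BCpl μ ν, ∫⁻ q in {q : Traj d T × Traj d T | q.1 ≠ q.2},
    (ENNReal.ofReal (w q.1) + ENNReal.ofReal (w q.2)) ∂π

/-- `p`-th power of the adapted Wasserstein distance (cost `|x-y|_p^p`). -/
def AWpow (p : ℝ) {d T : ℕ} (μ ν : Measure (Traj d T)) : ℝ≥0∞ :=
  ⨅ π ∈ BCpl μ ν, ∫⁻ q, ENNReal.ofReal (∑ i, ∑ j, |q.1 i j - q.2 i j| ^ p) ∂π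

/-- The weight `w_p(x) = 1 + |x|_p^p`. -/
def wp (p : ℝ) {d T : ℕ} (x : Traj d T) : ℝ := 1 + ∑ i, ∑ j, |x i j| ^ p

/-!
Under `ν` a path starts at `0` and at each time `t ≥ 2` it jumps to the absorbing state `1` with
probability `p`; under `μ` the paths that would not jump by time `T` jump at time `1` instead. The
two laws differ only by moving mass `(1 - p) ^ (T - 1)` from the constant path, of weight `1`, to a
path of weight `0`, and this is `TV_w`. A bicausal coupling, however, cannot look ahead when it
separates the paths: the mass it leaves on the diagonal at the path jumping at time `t + 1` is at
most `p` times the `μ`-mass of not having jumped up to `t`, which is `(1 - p) ^ (T - 1)` less than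
the `ν`-mass. So at that path, of weight `∏ s ∈ Finset.Icc (t + 1) T, (1 + c s)`, each marginal has
mass at least `p * (1 - p) ^ (T - 1)` off the diagonal, and the ratio tends to the claimed constant
as `p → 1`.
-/

open scoped NNReal

section ConditionalIndependence

variable {Ω β : Type*} {mΩ : MeasurableSpace Ω} [MeasurableSpace β] [MeasurableSingletonClass β]
  {π : Measure Ω} [IsFiniteMeasure π] {f : Ω → β}

lemma measureReal_fiber_mul_condExp_comap (hf : Measurable f) {g : Ω → ℝ} (hg : Integrable g π)
    (ω : Ω) :
    π.real (f ⁻¹' {f ω}) * (π[g | MeasurableSpace.comap f inferInstance]) ω =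
      ∫ x in f ⁻¹' {f ω}, g x ∂π := by
  have hfiber : MeasurableSet (f ⁻¹' {f ω}) := hf (measurableSet_singleton _)
  have hconst : Set.EqOn (π[g | MeasurableSpace.comap f inferInstance])
      (fun _ => (π[g | MeasurableSpace.comap f inferInstance]) ω) (f ⁻¹' {f ω}) :=
    fun x hx => stronglyMeasurable_condExp.measurable.factorsThrough hx
  rw [← setIntegral_condExp hf.comap_le hg ⟨_, measurableSet_singleton _, rfl⟩,
    setIntegral_congr_fun hfiber hconst, setIntegral_const, smul_eq_mul]

lemma measureReal_fiber_mul_inter_of_condIndep_comap [StandardBorelSpace Ω] (hf : Measurable f)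
    {m₁ m₂ : MeasurableSpace Ω} (hm₁ : m₁ ≤ mΩ) (hm₂ : m₂ ≤ mΩ)
    (hind : CondIndep (MeasurableSpace.comap f inferInstance) m₁ m₂ hf.comap_le π)
    (b : β) {s t : Set Ω} (hs : MeasurableSet[m₁] s) (ht : MeasurableSet[m₂] t) :
    π.real (f ⁻¹' {b}) * π.real (f ⁻¹' {b} ∩ (s ∩ t)) =
      π.real (f ⁻¹' {b} ∩ s) * π.real (f ⁻¹' {b} ∩ t) := by
  by_cases hb : π (f ⁻¹' {b}) = 0
  · have hnull (u : Set Ω) : π.real (f ⁻¹' {b} ∩ u) = 0 := by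
      rw [measureReal_def, measure_mono_null Set.inter_subset_left hb, ENNReal.toReal_zero]
    rw [hnull, hnull, mul_zero, zero_mul]
  have hprod := (condIndep_iff _ m₁ m₂ hf.comap_le hm₁ hm₂ π).1 hind s t hs ht
  obtain ⟨ω, rfl, hω⟩ := ((frequently_ae_mem_iff.2 hb).and_eventually hprod).exists
  have hcond {u : Set Ω} (hu : MeasurableSet[mΩ] u) :
      π.real (f ⁻¹' {f ω} ∩ u) =
        π.real (f ⁻¹' {f ω}) * (π⟦u | MeasurableSpace.comap f inferInstance⟧) ω := by
    rw [measureReal_fiber_mul_condExp_comap hf ((integrable_const 1).indicator hu) ω,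
      setIntegral_indicator hu, setIntegral_const, smul_eq_mul, mul_one]
  rw [hcond (hm₁ _ hs), hcond (hm₂ _ ht), hcond ((hm₁ _ hs).inter (hm₂ _ ht)), hω, Pi.mul_apply]
  ring

end ConditionalIndependence

section Couplings

variable {Ω α : Type*} [MeasurableSpace Ω] [MeasurableSpace α] {μ ν : Measure α}
  {π : Measure (α × α)}

lemma map_prodMk_mem_Cpl {ρ : Measure Ω} [IsProbabilityMeasure ρ] {f g : Ω → α}
    (hf : Measurable f) (hg : Measurable g) :
    ρ.map (fun ω => (f ω, g ω)) ∈ Cpl (ρ.map f) (ρ.map g) :=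
  ⟨Measure.isProbabilityMeasure_map (hf.prodMk hg).aemeasurable,
    Measure.map_map measurable_fst (hf.prodMk hg), Measure.map_map measurable_snd (hf.prodMk hg)⟩

lemma measureReal_fst_preimage_of_mem_Cpl (hπ : π ∈ Cpl μ ν) {s : Set α} (hs : MeasurableSet s) :
    π.real (Prod.fst ⁻¹' s) = μ.real s := by
  rw [← hπ.2.1, map_measureReal_apply measurable_fst hs]

lemma measureReal_snd_preimage_of_mem_Cpl (hπ : π ∈ Cpl μ ν) {s : Set α} (hs : MeasurableSet s) :
    π.real (Prod.snd ⁻¹' s) = ν.real s := by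
  rw [← hπ.2.2, map_measureReal_apply measurable_snd hs]

variable [MeasurableSingletonClass α] {w : α → ℝ}

lemma ofReal_sum_mul_measureReal_le_setLIntegral {ρ : Measure Ω} [IsFiniteMeasure ρ] {X : Ω → α}
    (hX : Measurable X) (hw : Measurable w) (hw0 : ∀ a, 0 ≤ w a) (A : Set Ω) (F : Finset α) :
    ENNReal.ofReal (∑ a ∈ F, ρ.real (X ⁻¹' {a} ∩ A) * w a) ≤
      ∫⁻ ω in A, ENNReal.ofReal (w (X ω)) ∂ρ :=
  calc ENNReal.ofReal (∑ a ∈ F, ρ.real (X ⁻¹' {a} ∩ A) * w a)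
      = ∑ a ∈ F, ENNReal.ofReal (w a) * (ρ.restrict A).map X {a} := by
        rw [ENNReal.ofReal_sum_of_nonneg fun a _ => mul_nonneg measureReal_nonneg (hw0 a)]
        refine Finset.sum_congr rfl fun a _ => ?_
        rw [Measure.map_apply hX (measurableSet_singleton a),
          Measure.restrict_apply (hX (measurableSet_singleton a)), mul_comm,
          ENNReal.ofReal_mul (hw0 a), ofReal_measureReal]
    _ = ∫⁻ a in F, ENNReal.ofReal (w a) ∂((ρ.restrict A).map X) := (lintegral_finset F _).symm
    _ ≤ ∫⁻ a, ENNReal.ofReal (w a) ∂((ρ.restrict A).map X) := setLIntegral_le_lintegral _ _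
    _ = ∫⁻ ω in A, ENNReal.ofReal (w (X ω)) ∂ρ := lintegral_map hw.ennreal_ofReal hX

lemma measureReal_diag_le_fst (hπ : π ∈ Cpl μ ν) (a : α) : π.real {(a, a)} ≤ μ.real {a} := by
  have := hπ.1
  rw [← measureReal_fst_preimage_of_mem_Cpl hπ (measurableSet_singleton a)]
  exact measureReal_mono (Set.singleton_subset_iff.2 rfl)

lemma measureReal_diag_le_snd (hπ : π ∈ Cpl μ ν) (a : α) : π.real {(a, a)} ≤ ν.real {a} := by
  have := hπ.1
  rw [← measureReal_snd_preimage_of_mem_Cpl hπ (measurableSet_singleton a)]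
  exact measureReal_mono (Set.singleton_subset_iff.2 rfl)

lemma ofReal_sum_measureReal_sub_diag_le_lintegral_ne (hw : Measurable w) (hw0 : ∀ a, 0 ≤ w a)
    (hπ : π ∈ Cpl μ ν) (F G : Finset α) :
    ENNReal.ofReal (∑ a ∈ F, (μ.real {a} - π.real {(a, a)}) * w a +
        ∑ a ∈ G, (ν.real {a} - π.real {(a, a)}) * w a) ≤
      ∫⁻ q in {q : α × α | q.1 ≠ q.2},
        (ENNReal.ofReal (w q.1) + ENNReal.ofReal (w q.2)) ∂π := by
  have := hπ.1
  have hfst (a : α) : μ.real {a} - π.real {(a, a)} ≤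
      π.real (Prod.fst ⁻¹' {a} ∩ {q : α × α | q.1 ≠ q.2}) := by
    rw [← measureReal_fst_preimage_of_mem_Cpl hπ (measurableSet_singleton a)]
    refine le_trans le_measureReal_sdiff (measureReal_mono ?_)
    rintro ⟨x, y⟩ ⟨rfl, hxy⟩
    exact ⟨rfl, fun h => hxy (Prod.ext rfl h.symm)⟩
  have hsnd (a : α) : ν.real {a} - π.real {(a, a)} ≤
      π.real (Prod.snd ⁻¹' {a} ∩ {q : α × α | q.1 ≠ q.2}) := by
    rw [← measureReal_snd_preimage_of_mem_Cpl hπ (measurableSet_singleton a)]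
    refine le_trans le_measureReal_sdiff (measureReal_mono ?_)
    rintro ⟨x, y⟩ ⟨rfl, hxy⟩
    exact ⟨rfl, fun h => hxy (Prod.ext h rfl)⟩
  rw [lintegral_add_left (by fun_prop)]
  refine ENNReal.ofReal_add_le.trans (add_le_add
    (le_trans (ENNReal.ofReal_le_ofReal ?_)
      (ofReal_sum_mul_measureReal_le_setLIntegral measurable_fst hw hw0 _ F))
    (le_trans (ENNReal.ofReal_le_ofReal ?_)
      (ofReal_sum_mul_measureReal_le_setLIntegral measurable_snd hw hw0 _ G)))
  · exact Finset.sum_le_sum fun a _ => mul_le_mul_of_nonneg_right (hfst a) (hw0 a)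
  · exact Finset.sum_le_sum fun a _ => mul_le_mul_of_nonneg_right (hsnd a) (hw0 a)

end Couplings

section PathSpace

variable {d T : ℕ} {μ ν : Measure (Traj d T)} {w : Traj d T → ℝ}

lemma TVw_map_map_le {Ω : Type*} [MeasurableSpace Ω] {ρ : Measure Ω} [IsProbabilityMeasure ρ]
    {f g : Ω → Traj d T} (hf : Measurable f) (hg : Measurable g) (hw : Measurable w) :
    TVw w (ρ.map f) (ρ.map g) ≤
      ∫⁻ ω in {ω | f ω ≠ g ω}, (ENNReal.ofReal (w (f ω)) + ENNReal.ofReal (w (g ω))) ∂ρ := by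
  refine (iInf₂_le _ (map_prodMk_mem_Cpl hf hg)).trans_eq ?_
  rw [setLIntegral_map ?_ (by fun_prop) (hf.prodMk hg)]
  · rfl
  · exact (measurableSet_eq_fun measurable_fst measurable_snd).compl

lemma measureReal_diag_mul_le_of_mem_BCpl {π : Measure (Traj d T × Traj d T)}
    (hπ : π ∈ BCpl μ ν) {t : ℕ} (ht : 1 ≤ t) (htT : t + 1 ≤ T) (y : Traj d T) :
    π.real {(y, y)} *
        ν.real (restr d (Nat.le_of_succ_le htT) ⁻¹' {restr d (Nat.le_of_succ_le htT) y}) ≤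
      μ.real (restr d (Nat.le_of_succ_le htT) ⁻¹' {restr d (Nat.le_of_succ_le htT) y}) *
        ν.real {y} := by
  obtain ⟨hcpl, hfin, hbc⟩ := hπ
  set r := restr d (Nat.le_of_succ_le htT) (T := T)
  have hpast : MeasurableSet (r ⁻¹' {r y}) := measurable_restr d _ (measurableSet_singleton _)
  have hind := measureReal_fiber_mul_inter_of_condIndep_comap
    ((measurable_restr d (Nat.le_of_succ_le htT)).comp measurable_snd)
    (sigmaX_le d T _) (sigmaY_le d T _) (hbc t ht htT).2 (r y)
    (s := Prod.fst ⁻¹' (r ⁻¹' {r y})) (t := Prod.snd ⁻¹' {y})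
    ⟨{r y}, measurableSet_singleton _, rfl⟩ ⟨{y}, measurableSet_singleton _, rfl⟩
  calc π.real {(y, y)} * ν.real (r ⁻¹' {r y})
      ≤ π.real (Prod.snd ⁻¹' (r ⁻¹' {r y}) ∩ (Prod.fst ⁻¹' (r ⁻¹' {r y}) ∩ Prod.snd ⁻¹' {y})) *
        π.real (Prod.snd ⁻¹' (r ⁻¹' {r y})) := by
        rw [measureReal_snd_preimage_of_mem_Cpl hcpl hpast]
        refine mul_le_mul_of_nonneg_right (measureReal_mono ?_) measureReal_nonneg
        rintro _ rfl
        exact ⟨rfl, rfl, rfl⟩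
    _ = π.real (Prod.snd ⁻¹' (r ⁻¹' {r y}) ∩ Prod.fst ⁻¹' (r ⁻¹' {r y})) *
        π.real (Prod.snd ⁻¹' (r ⁻¹' {r y}) ∩ Prod.snd ⁻¹' {y}) := by rw [mul_comm]; exact hind
    _ ≤ μ.real (r ⁻¹' {r y}) * ν.real {y} := by
        rw [← measureReal_fst_preimage_of_mem_Cpl hcpl hpast,
          ← measureReal_snd_preimage_of_mem_Cpl hcpl (measurableSet_singleton y)]
        exact mul_le_mul (measureReal_mono Set.inter_subset_right)
          (measureReal_mono Set.inter_subset_right) measureReal_nonneg measureReal_nonneg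

end PathSpace

section Disintegration

variable {d : ℕ}

lemma measurable_snoc_traj (t : ℕ) :
    Measurable fun q : Traj d t × (Fin d → ℝ) => (Fin.snoc q.1 q.2 : Traj d (t + 1)) := by
  refine measurable_pi_lambda _ fun i => ?_
  induction i using Fin.lastCases with
  | last => simpa only [Fin.snoc_last] using measurable_snd
  | cast j => simpa only [Fin.snoc_castSucc] using measurable_fst.eval

lemma restr_snoc {t : ℕ} (x : Traj d t) (y : Fin d → ℝ) :
    restr d (Nat.le_succ t) (Fin.snoc x y : Traj d (t + 1)) = x :=
  funext fun i => Fin.snoc_castSucc (α := fun _ => Fin d → ℝ) y x i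

lemma snoc_restr_last {t : ℕ} (x : Traj d (t + 1)) :
    (Fin.snoc (restr d (Nat.le_succ t) x) (x (Fin.last t)) : Traj d (t + 1)) = x :=
  Fin.snoc_init_self x

lemma map_compProd_eq_bind {α β γ : Type*} [MeasurableSpace α] [MeasurableSpace β]
    [MeasurableSpace γ] {m : Measure α} [SFinite m] {κ : Kernel α β} [IsSFiniteKernel κ]
    {f : α × β → γ} (hf : Measurable f) :
    (m ⊗ₘ κ).map f = m.bind fun x => (κ x).map fun y => f (x, y) := by
  rw [Measure.compProd_eq_comp_prod, Measure.map_comp _ _ hf]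
  congr 1 with x : 1
  rw [Kernel.map_apply _ hf, Kernel.prod_apply, Kernel.id_apply, Measure.dirac_prod,
    Measure.map_map hf measurable_prodMk_left]
  rfl

lemma exists_last_step_disintegration {t : ℕ} (ρ : Measure (Traj d (t + 1))) [IsFiniteMeasure ρ] :
    ∃ κ : Kernel (Traj d t) (Fin d → ℝ), IsMarkovKernel κ ∧
      ρ = (ρ.map (restr d (Nat.le_succ t))).bind fun x => (κ x).map (Fin.snoc x) := by
  have hsplit : Measurable fun x : Traj d (t + 1) => (restr d (Nat.le_succ t) x, x (Fin.last t)) :=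
    (measurable_restr d _).prodMk (measurable_pi_apply _)
  set σ := ρ.map fun x => (restr d (Nat.le_succ t) x, x (Fin.last t)) with hσ
  have hfst : σ.fst = ρ.map (restr d (Nat.le_succ t)) :=
    Measure.fst_map_prodMk (measurable_pi_apply _)
  refine ⟨σ.condKernel, inferInstance, ?_⟩
  rw [← hfst, ← map_compProd_eq_bind (measurable_snoc_traj t), σ.disintegrate, hσ,
    Measure.map_map (measurable_snoc_traj t) hsplit]
  simp only [Function.comp_def, snoc_restr_last, Measure.map_id']

lemma exists_disintegration {T : ℕ} (ν : Measure (Traj d T)) [IsFiniteMeasure ν] :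
    ∃ κ : ∀ t, Kernel (Traj d t) (Fin d → ℝ), (∀ t, IsMarkovKernel (κ t)) ∧
      ∀ t, ∀ h : t + 1 ≤ T, ν.map (restr d h) =
        (ν.map (restr d (Nat.le_of_succ_le h))).bind fun x => (κ t x).map (Fin.snoc x) := by
  have hstep (t : ℕ) : ∃ κ : Kernel (Traj d t) (Fin d → ℝ), IsMarkovKernel κ ∧
      ∀ h : t + 1 ≤ T, ν.map (restr d h) =
        (ν.map (restr d (Nat.le_of_succ_le h))).bind fun x => (κ x).map (Fin.snoc x) := by
    by_cases h : t + 1 ≤ T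
    · obtain ⟨κ, hκ, hdis⟩ := exists_last_step_disintegration (ν.map (restr d h))
      rw [Measure.map_map (measurable_restr d _) (measurable_restr d h)] at hdis
      exact ⟨κ, hκ, fun _ => hdis⟩
    · exact ⟨Kernel.const _ (Measure.dirac 0), inferInstance, fun h' => absurd h' h⟩
  choose κ hκ using hstep
  exact ⟨κ, fun t => (hκ t).1, fun t => (hκ t).2⟩

end Disintegration

section StepPaths

variable {d : ℕ}

/-- The path that jumps from the state `0` to the state `(1, …, 1)` at time `k`. Times are counted
from `1`, as in the paper, so the time of the coordinate `i : Fin t` is `i + 1`. -/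
def stepPath {t : ℕ} (k : ℕ) : Traj d t := fun i _ => if k ≤ (i : ℕ) + 1 then 1 else 0

@[simp]
lemma restr_stepPath {t T : ℕ} (h : t ≤ T) (k : ℕ) :
    restr d h (stepPath k) = stepPath k := rfl

variable [NeZero d]

lemma stepPath_eq_zero_iff {t k : ℕ} (hk : 1 ≤ k) : (stepPath k : Traj d t) = 0 ↔ t < k := by
  constructor
  · intro h
    by_contra! hkt
    have hlast := congrFun (congrFun h ⟨t - 1, by omega⟩) 0
    simp [stepPath, Nat.sub_add_cancel (hk.trans hkt), hkt] at hlast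
  · exact fun h => funext fun i => funext fun _ => if_neg (by omega)

lemma stepPath_eq_iff {t j k : ℕ} (hj : 1 ≤ j) (hjt : j ≤ t) (hk : 1 ≤ k) :
    (stepPath k : Traj d t) = stepPath j ↔ k = j := by
  refine ⟨fun h => ?_, fun h => h ▸ rfl⟩
  have hzero {s : ℕ} (hs : s ≤ t) : s < k ↔ s < j := by
    rw [← stepPath_eq_zero_iff (d := d) hk, ← stepPath_eq_zero_iff (d := d) hj,
      ← restr_stepPath hs, h, restr_stepPath]
  have hat := hzero hjt
  have hbefore := hzero (s := j - 1) (by omega)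
  omega

end StepPaths

section JumpLaws

lemma geometricMeasure_real_Ici {p : unitInterval} (hp : p ≠ 0) (n : ℕ) :
    (geometricMeasure p).real (Set.Ici n) = (1 - p) ^ n := by
  induction n with
  | zero =>
    rw [show Set.Ici 0 = Set.univ from Set.Ici_bot, probReal_univ, pow_zero]
  | succ n ih =>
    have hsplit : Set.Ici (n + 1) = Set.Ici n \ {n} := by
      ext m
      simp only [Set.mem_Ici, Set.mem_sdiff, Set.mem_singleton_iff]
      omega
    rw [hsplit, measureReal_sdiff (by simp) (measurableSet_singleton n), ih,
      geometricMeasure_real_singleton hp]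
    ring

lemma geometricMeasure_real_Ico {p : unitInterval} (hp : p ≠ 0) {m n : ℕ} (hmn : m ≤ n) :
    (geometricMeasure p).real (Set.Ico m n) = (1 - p) ^ m - (1 - p) ^ n := by
  rw [← Set.Ici_sdiff_Ici, measureReal_sdiff (Set.Ici_subset_Ici.2 hmn) measurableSet_Ici,
    geometricMeasure_real_Ici hp, geometricMeasure_real_Ici hp]

variable {d T t : ℕ} {p : unitInterval}

/-- The law of a path started in `0` that jumps to the absorbing state `(1, …, 1)` with
probability `p` at each of the times `2, 3, …`; this is the target measure `ν` of the
counterexample. -/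
def stepLaw (d : ℕ) (p : unitInterval) (T : ℕ) : Measure (Traj d T) :=
  (geometricMeasure p).map fun n => stepPath (n + 2)

/-- The jump time under `perturbedLaw` of a path that jumps at time `n + 2` under `stepLaw`: paths
that would jump only after the horizon `T` are sent to time `1`. -/
def earlyJump (T n : ℕ) : ℕ := if n + 2 ≤ T then n + 2 else 1

/-- The modification of `stepLaw` in which the paths that have not jumped by time `T` jump at time
`1` instead; this is the source measure `μ` of the counterexample. -/
def perturbedLaw (d : ℕ) (p : unitInterval) (T : ℕ) : Measure (Traj d T) :=
  (geometricMeasure p).map fun n => stepPath (earlyJump T n)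

instance : IsProbabilityMeasure (stepLaw d p T) :=
  Measure.isProbabilityMeasure_map (measurable_of_countable _).aemeasurable

instance : IsProbabilityMeasure (perturbedLaw d p T) :=
  Measure.isProbabilityMeasure_map (measurable_of_countable _).aemeasurable

lemma stepLaw_real_apply {s : Set (Traj d T)} (hs : MeasurableSet s) :
    (stepLaw d p T).real s = (geometricMeasure p).real {n | stepPath (n + 2) ∈ s} :=
  map_measureReal_apply (measurable_of_countable _) hs

lemma perturbedLaw_real_apply {s : Set (Traj d T)} (hs : MeasurableSet s) :
    (perturbedLaw d p T).real s = (geometricMeasure p).real {n | stepPath (earlyJump T n) ∈ s} :=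
  map_measureReal_apply (measurable_of_countable _) hs

lemma one_le_earlyJump (T n : ℕ) : 1 ≤ earlyJump T n := by
  unfold earlyJump
  split <;> omega

variable [NeZero d]

lemma stepLaw_real_singleton_stepPath (hp : p ≠ 0) (ht : 1 ≤ t) (htT : t + 1 ≤ T) :
    (stepLaw d p T).real {stepPath (t + 1)} = (1 - p) ^ (t - 1) * p := by
  have hset : {n | stepPath (n + 2) ∈ ({stepPath (t + 1)} : Set (Traj d T))} = {t - 1} := by
    ext n
    simp only [Set.mem_singleton_iff, Set.mem_ofPred_eq]
    rw [stepPath_eq_iff (by omega) htT (by omega)]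
    omega
  rw [stepLaw_real_apply (measurableSet_singleton _), hset, geometricMeasure_real_singleton hp]

lemma stepLaw_real_singleton_zero (hp : p ≠ 0) :
    (stepLaw d p T).real {0} = (1 - p) ^ (T - 1) := by
  have hset : {n | stepPath (n + 2) ∈ ({0} : Set (Traj d T))} = Set.Ici (T - 1) := by
    ext n
    simp only [Set.mem_singleton_iff, Set.mem_ofPred_eq, Set.mem_Ici]
    rw [stepPath_eq_zero_iff (by omega)]
    omega
  rw [stepLaw_real_apply (measurableSet_singleton _), hset, geometricMeasure_real_Ici hp]

lemma stepLaw_real_singleton_stepPath_one (hT : 1 ≤ T) :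
    (stepLaw d p T).real {stepPath 1} = 0 := by
  have hset : {n | stepPath (n + 2) ∈ ({stepPath 1} : Set (Traj d T))} = ∅ := by
    ext n
    simp only [Set.mem_singleton_iff, Set.mem_ofPred_eq, Set.mem_empty_iff_false, iff_false]
    rw [stepPath_eq_iff le_rfl hT (by omega)]
    omega
  rw [stepLaw_real_apply (measurableSet_singleton _), hset, measureReal_empty]

lemma stepLaw_real_restr_zero (hp : p ≠ 0) (htT : t ≤ T) :
    (stepLaw d p T).real (restr d htT ⁻¹' {0}) = (1 - p) ^ (t - 1) := by
  rw [← stepLaw_real_singleton_zero (d := d) hp,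
    stepLaw_real_apply (measurable_restr d htT (measurableSet_singleton 0)),
    stepLaw_real_apply (measurableSet_singleton 0)]
  rfl

lemma perturbedLaw_real_singleton_stepPath (hp : p ≠ 0) (ht : 1 ≤ t) (htT : t + 1 ≤ T) :
    (perturbedLaw d p T).real {stepPath (t + 1)} = (1 - p) ^ (t - 1) * p := by
  have hset : {n | stepPath (earlyJump T n) ∈ ({stepPath (t + 1)} : Set (Traj d T))} =
      {t - 1} := by
    ext n
    simp only [Set.mem_singleton_iff, Set.mem_ofPred_eq]
    rw [stepPath_eq_iff (by omega) htT (one_le_earlyJump T n), earlyJump]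
    grind
  rw [perturbedLaw_real_apply (measurableSet_singleton _), hset,
    geometricMeasure_real_singleton hp]

lemma perturbedLaw_real_singleton_stepPath_one (hp : p ≠ 0) (hT : 1 ≤ T) :
    (perturbedLaw d p T).real {stepPath 1} = (1 - p) ^ (T - 1) := by
  have hset : {n | stepPath (earlyJump T n) ∈ ({stepPath 1} : Set (Traj d T))} =
      Set.Ici (T - 1) := by
    ext n
    simp only [Set.mem_singleton_iff, Set.mem_ofPred_eq, Set.mem_Ici]
    rw [stepPath_eq_iff le_rfl hT (one_le_earlyJump T n), earlyJump]
    grind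
  rw [perturbedLaw_real_apply (measurableSet_singleton _), hset, geometricMeasure_real_Ici hp]

lemma perturbedLaw_real_restr_zero (hp : p ≠ 0) (ht : 1 ≤ t) (htT : t ≤ T) :
    (perturbedLaw d p T).real (restr d htT ⁻¹' {0}) = (1 - p) ^ (t - 1) - (1 - p) ^ (T - 1) := by
  have hset : {n | stepPath (earlyJump T n) ∈ restr d htT ⁻¹' {0}} =
      Set.Ico (t - 1) (T - 1) := by
    ext n
    simp only [Set.mem_preimage, restr_stepPath, Set.mem_singleton_iff, Set.mem_ofPred_eq,
      Set.mem_Ico]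
    rw [stepPath_eq_zero_iff (one_le_earlyJump T n), earlyJump]
    grind
  rw [perturbedLaw_real_apply (measurable_restr d htT (measurableSet_singleton 0)), hset,
    geometricMeasure_real_Ico hp (by omega)]

lemma perturbedLaw_real_singleton_zero (hT : 1 ≤ T) : (perturbedLaw d p T).real {0} = 0 := by
  have hset : {n | stepPath (earlyJump T n) ∈ ({0} : Set (Traj d T))} = ∅ := by
    ext n
    simp only [Set.mem_singleton_iff, Set.mem_ofPred_eq, Set.mem_empty_iff_false, iff_false]
    rw [stepPath_eq_zero_iff (one_le_earlyJump T n), earlyJump]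
    grind
  rw [perturbedLaw_real_apply (measurableSet_singleton _), hset, measureReal_empty]

end JumpLaws

section Distances

variable {d T : ℕ} [NeZero d] {p : unitInterval} {w : Traj d T → ℝ}
  {π : Measure (Traj d T × Traj d T)}

lemma le_lintegral_ne_of_mem_Cpl_perturbedLaw (hp : p ≠ 0) (hT : 1 ≤ T) (hw : Measurable w)
    (hw0 : ∀ x, 0 ≤ w x) (hπ : π ∈ Cpl (perturbedLaw d p T) (stepLaw d p T))
    {J : Finset (Traj d T)} (hone : stepPath 1 ∉ J) (hzero : 0 ∉ J) :
    ENNReal.ofReal ((1 - p) ^ (T - 1) * (w (stepPath 1) + w 0) +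
        (∑ x ∈ J, ((perturbedLaw d p T).real {x} - π.real {(x, x)}) * w x +
          ∑ x ∈ J, ((stepLaw d p T).real {x} - π.real {(x, x)}) * w x)) ≤
      ∫⁻ q in {q : Traj d T × Traj d T | q.1 ≠ q.2},
        (ENNReal.ofReal (w q.1) + ENNReal.ofReal (w q.2)) ∂π := by
  refine le_trans (ENNReal.ofReal_le_ofReal ?_) (ofReal_sum_measureReal_sub_diag_le_lintegral_ne
    hw hw0 hπ (insert (stepPath 1) J) (insert 0 J))
  have hdiag_one := measureReal_diag_le_snd hπ (stepPath 1)
  have hdiag_zero := measureReal_diag_le_fst hπ 0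
  rw [stepLaw_real_singleton_stepPath_one hT] at hdiag_one
  rw [perturbedLaw_real_singleton_zero hT] at hdiag_zero
  rw [Finset.sum_insert hone, Finset.sum_insert hzero, stepLaw_real_singleton_zero hp,
    perturbedLaw_real_singleton_stepPath_one hp hT]
  linarith [mul_le_mul_of_nonneg_right hdiag_one (hw0 (stepPath 1)),
    mul_le_mul_of_nonneg_right hdiag_zero (hw0 0)]

lemma TVw_perturbedLaw_stepLaw (hp : p ≠ 0) (hT : 1 ≤ T) (hw : Measurable w)
    (hw0 : ∀ x, 0 ≤ w x) :
    TVw w (perturbedLaw d p T) (stepLaw d p T) =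
      ENNReal.ofReal ((1 - p) ^ (T - 1) * (w (stepPath 1) + w 0)) := by
  have hagree {n : ℕ} (hn : n < T - 1) : earlyJump T n = n + 2 := if_pos (by omega)
  have hearly {n : ℕ} (hn : T - 1 ≤ n) : earlyJump T n = 1 := if_neg (by omega)
  have hlate {n : ℕ} (hn : T - 1 ≤ n) : (stepPath (n + 2) : Traj d T) = 0 :=
    (stepPath_eq_zero_iff (by omega)).2 (by omega)
  have hne : {n | (stepPath (earlyJump T n) : Traj d T) ≠ stepPath (n + 2)} = Set.Ici (T - 1) := by
    ext n
    rcases lt_or_ge n (T - 1) with hn | hn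
    · simpa [hagree hn] using Nat.lt_sub_iff_add_lt.1 hn
    · simpa [hearly hn, hlate hn, hn, stepPath_eq_zero_iff] using Nat.ne_of_gt hT
  have hval : Set.EqOn (fun n => ENNReal.ofReal (w (stepPath (earlyJump T n))) +
      ENNReal.ofReal (w (stepPath (n + 2)))) (fun _ => ENNReal.ofReal (w (stepPath 1) + w 0))
      (Set.Ici (T - 1)) := fun n hn => by
    simp only [hearly hn, hlate hn, ENNReal.ofReal_add (hw0 _) (hw0 _)]
  apply le_antisymm
  · refine (TVw_map_map_le (measurable_of_countable _) (measurable_of_countable _) hw).trans_eq ?_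
    rw [hne, setLIntegral_congr_fun measurableSet_Ici hval, setLIntegral_const, mul_comm,
      ← geometricMeasure_real_Ici hp, ENNReal.ofReal_mul measureReal_nonneg, ofReal_measureReal]
  · refine le_iInf₂ fun π hπ => ?_
    simpa only [Finset.sum_empty, add_zero] using le_lintegral_ne_of_mem_Cpl_perturbedLaw hp hT
      hw hw0 hπ (Finset.notMem_empty _) (Finset.notMem_empty _)

lemma measureReal_diag_stepPath_le (hp0 : p ≠ 0) (hp1 : p ≠ 1)
    (hπ : π ∈ BCpl (perturbedLaw d p T) (stepLaw d p T)) {t : ℕ} (ht : 1 ≤ t) (htT : t + 1 ≤ T) :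
    π.real {(stepPath (t + 1), stepPath (t + 1))} ≤
      ((1 - p) ^ (t - 1) - (1 - p) ^ (T - 1)) * p := by
  have hpos : (0 : ℝ) < (1 - p) ^ (t - 1) :=
    pow_pos (sub_pos.2 (unitInterval.coe_lt_one.2 (unitInterval.lt_one_iff_ne_one.2 hp1))) _
  have hdiag := measureReal_diag_mul_le_of_mem_BCpl hπ ht htT (stepPath (t + 1))
  rw [restr_stepPath, (stepPath_eq_zero_iff (by omega)).2 (Nat.lt_succ_self t),
    stepLaw_real_restr_zero hp0, perturbedLaw_real_restr_zero hp0 ht,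
    stepLaw_real_singleton_stepPath hp0 ht htT] at hdiag
  refine le_of_mul_le_mul_right (hdiag.trans_eq ?_) hpos
  ring

lemma le_sum_mul_sub_diag_stepPath (hp0 : p ≠ 0) (hp1 : p ≠ 1) (hw0 : ∀ x, 0 ≤ w x)
    (hπ : π ∈ BCpl (perturbedLaw d p T) (stepLaw d p T)) {ρ : Measure (Traj d T)}
    (hρ : ∀ t, 1 ≤ t → t + 1 ≤ T → ρ.real {stepPath (t + 1)} = (1 - p) ^ (t - 1) * p) :
    (1 - p) ^ (T - 1) * (p * ∑ t ∈ Finset.Icc 1 (T - 1), w (stepPath (t + 1))) ≤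
      ∑ x ∈ (Finset.Icc 1 (T - 1)).image (fun t => stepPath (t + 1)),
        (ρ.real {x} - π.real {(x, x)}) * w x := by
  rw [Finset.sum_image, ← mul_assoc, Finset.mul_sum]
  · refine Finset.sum_le_sum fun t ht => mul_le_mul_of_nonneg_right ?_ (hw0 _)
    rw [Finset.mem_Icc] at ht
    have hdiag := measureReal_diag_stepPath_le hp0 hp1 hπ ht.1 (by omega)
    rw [hρ t ht.1 (by omega)]
    linarith
  · intro s hs t ht hst
    simp only [Finset.coe_Icc, Set.mem_Icc] at hs ht
    exact Nat.succ_injective ((stepPath_eq_iff (by omega) (by omega) (by omega)).1 hst)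

lemma le_ATVw_perturbedLaw_stepLaw (hp0 : p ≠ 0) (hp1 : p ≠ 1) (hT : 1 ≤ T) (hw : Measurable w)
    (hw0 : ∀ x, 0 ≤ w x) :
    ENNReal.ofReal ((1 - p) ^ (T - 1) * (w (stepPath 1) + w 0 +
        2 * (p * ∑ t ∈ Finset.Icc 1 (T - 1), w (stepPath (t + 1))))) ≤
      ATVw w (perturbedLaw d p T) (stepLaw d p T) := by
  refine le_iInf₂ fun π hπ => ?_
  set J : Finset (Traj d T) := (Finset.Icc 1 (T - 1)).image fun t => stepPath (t + 1)
  have hone : stepPath 1 ∉ J := by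
    simp only [J, Finset.mem_image, Finset.mem_Icc, not_exists, not_and]
    intro t ht
    rw [stepPath_eq_iff le_rfl hT (by omega)]
    omega
  have hzero : 0 ∉ J := by
    simp only [J, Finset.mem_image, Finset.mem_Icc, not_exists, not_and]
    intro t ht
    rw [stepPath_eq_zero_iff (by omega)]
    omega
  have hfst := le_sum_mul_sub_diag_stepPath hp0 hp1 hw0 hπ (ρ := perturbedLaw d p T)
    fun _ => perturbedLaw_real_singleton_stepPath hp0
  have hsnd := le_sum_mul_sub_diag_stepPath hp0 hp1 hw0 hπ (ρ := stepLaw d p T)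
    fun _ => stepLaw_real_singleton_stepPath hp0
  refine le_trans (ENNReal.ofReal_le_ofReal ?_)
    (le_lintegral_ne_of_mem_Cpl_perturbedLaw hp0 hT hw hw0 hπ.1 hone hzero)
  linarith

end Distances

section Weight

variable {d : ℕ} {c : ℕ → ℝ≥0}

/-- The weights `w_t` of the counterexample: they equal `1` before the jump, drop to `0` on a jump
at time `1`, and are multiplied by `1 + c_s` at the time `s ≥ 2` of the jump and at every later
time. -/
def pathWeight (c : ℕ → ℝ≥0) : (t : ℕ) → Traj d t → ℝ≥0
  | 0, _ => 1
  | t + 1, x =>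
    if x = 0 then 1
    else (if t = 0 then 0 else 1 + c (t + 1)) * pathWeight c t (restr d (Nat.le_succ t) x)

lemma measurable_pathWeight (t : ℕ) : Measurable (pathWeight c t : Traj d t → ℝ≥0) := by
  induction t with
  | zero => exact measurable_const
  | succ t ih =>
    exact Measurable.ite (measurableSet_singleton 0) measurable_const
      ((ih.comp (measurable_restr d _)).const_mul _)

@[simp]
lemma pathWeight_zero (t : ℕ) : pathWeight c t (0 : Traj d t) = 1 := by
  cases t with
  | zero => rfl
  | succ t => exact if_pos rfl

lemma pathWeight_restr_le {t : ℕ} (ht : 1 ≤ t) (x : Traj d (t + 1)) :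
    pathWeight c t (restr d (Nat.le_succ t) x) ≤ pathWeight c (t + 1) x := by
  by_cases hx : x = 0
  · subst hx
    exact (pathWeight_zero t).trans (pathWeight_zero (t + 1)).symm |>.le
  · rw [pathWeight, if_neg hx, if_neg (by omega)]
    exact le_mul_of_one_le_left zero_le le_self_add

lemma pathWeight_succ_le (t : ℕ) (x : Traj d (t + 1)) :
    pathWeight c (t + 1) x ≤ (1 + c (t + 1)) * pathWeight c t (restr d (Nat.le_succ t) x) := by
  by_cases hx : x = 0
  · subst hx
    rw [pathWeight_zero, show restr d (Nat.le_succ t) 0 = 0 from rfl, pathWeight_zero, mul_one]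
    exact le_self_add
  · rw [pathWeight, if_neg hx]
    gcongr
    split
    · exact zero_le
    · exact le_rfl

lemma pathWeight_le_prod (t : ℕ) (x : Traj d t) :
    pathWeight c t x ≤ ∏ s ∈ Finset.Icc 1 t, (1 + c s) := by
  induction t with
  | zero => simp [pathWeight]
  | succ t ih =>
    rw [Finset.prod_Icc_succ_top (by omega), mul_comm]
    exact (pathWeight_succ_le t x).trans (mul_le_mul_right (ih _) _)

lemma lintegral_pathWeight_lt_top {T : ℕ} (ρ : Measure (Traj d T)) [IsFiniteMeasure ρ] :
    ∫⁻ x, ENNReal.ofReal (pathWeight c T x) ∂ρ < ⊤ := by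
  refine IsFiniteMeasure.lintegral_lt_top_of_bounded_to_ennreal ρ
    ⟨∏ s ∈ Finset.Icc 1 T, (1 + c s), fun x => ?_⟩
  rw [ENNReal.ofReal_coe_nnreal]
  exact ENNReal.coe_le_coe.2 (pathWeight_le_prod T x)

lemma lintegral_pathWeight_snoc_le {t : ℕ} (x : Traj d t) (ρ : Measure (Fin d → ℝ))
    [IsProbabilityMeasure ρ] :
    ∫⁻ y, ENNReal.ofReal (pathWeight c (t + 1) (Fin.snoc x y : Traj d (t + 1))) ∂ρ ≤
      ENNReal.ofReal ((1 + c (t + 1)) * pathWeight c t x) := by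
  refine (lintegral_mono fun y => ENNReal.ofReal_le_ofReal ?_).trans_eq
    ((lintegral_const _).trans (by rw [measure_univ, mul_one]))
  have hgrowth := pathWeight_succ_le (c := c) t (Fin.snoc x y)
  rw [restr_snoc] at hgrowth
  exact_mod_cast hgrowth

variable [NeZero d]

lemma pathWeight_stepPath {k : ℕ} (hk : 2 ≤ k) (t : ℕ) :
    pathWeight c t (stepPath k : Traj d t) = ∏ s ∈ Finset.Icc k t, (1 + c s) := by
  induction t with
  | zero => rw [pathWeight, Finset.Icc_eq_empty_of_lt (by omega), Finset.prod_empty]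
  | succ t ih =>
    rcases lt_or_ge (t + 1) k with htk | hkt
    · rw [(stepPath_eq_zero_iff (by omega)).2 htk, pathWeight_zero,
        Finset.Icc_eq_empty_of_lt htk, Finset.prod_empty]
    · rw [pathWeight, if_neg ((stepPath_eq_zero_iff (by omega)).not.2 (by omega)),
        if_neg (by omega), restr_stepPath, ih, Finset.prod_Icc_succ_top hkt, mul_comm]

lemma pathWeight_stepPath_one {t : ℕ} (ht : 1 ≤ t) :
    pathWeight c t (stepPath 1 : Traj d t) = 0 := by
  induction t, ht using Nat.le_induction with
  | base =>
    rw [pathWeight, if_neg (by simp [stepPath_eq_zero_iff]), if_pos rfl, zero_mul]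
  | succ t ht ih =>
    rw [pathWeight, if_neg (by simp [stepPath_eq_zero_iff]), restr_stepPath, ih, mul_zero]

end Weight

lemma exists_unitInterval_sub_le_mul {S ε : ℝ} (hS : 0 ≤ S) (hε : 0 < ε) :
    ∃ p : unitInterval, p ≠ 0 ∧ p ≠ 1 ∧ S - ε ≤ p * S := by
  have hpos : 0 < S + 2 * ε := by linarith
  have hlt : ε / (S + 2 * ε) < 1 := (div_lt_one hpos).2 (by linarith)
  have hq : 0 < ε / (S + 2 * ε) := div_pos hε hpos
  refine ⟨⟨1 - ε / (S + 2 * ε), by linarith, by linarith⟩, fun h => ?_, fun h => ?_, ?_⟩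
  · linarith [congrArg Subtype.val h, Set.Icc.coe_zero (R := ℝ)]
  · linarith [congrArg Subtype.val h, Set.Icc.coe_one (R := ℝ)]
  · have hS' : ε / (S + 2 * ε) * S ≤ ε := by
      rw [div_mul_eq_mul_div, div_le_iff₀ hpos]
      nlinarith
    linarith

section Sharpness

variable {d T : ℕ} [NeZero d] {p : unitInterval}

lemma TVw_pathWeight (hp : p ≠ 0) (hT : 1 ≤ T) (c : ℕ → ℝ≥0) :
    TVw (fun x => (pathWeight c T x : ℝ)) (perturbedLaw d p T) (stepLaw d p T) =
      ENNReal.ofReal ((1 - p) ^ (T - 1)) := by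
  rw [TVw_perturbedLaw_stepLaw hp hT (measurable_pathWeight T).coe_nnreal_real
    fun _ => NNReal.coe_nonneg _, pathWeight_stepPath_one hT, pathWeight_zero]
  simp only [NNReal.coe_zero, NNReal.coe_one, zero_add, mul_one]

lemma le_ATVw_pathWeight (hp0 : p ≠ 0) (hp1 : p ≠ 1) (hT : 1 ≤ T) (c : ℕ → ℝ≥0) :
    ENNReal.ofReal (1 + 2 * (p * ∑ t ∈ Finset.Icc 1 (T - 1),
        ∏ s ∈ Finset.Icc (t + 1) T, (1 + (c s : ℝ)))) * ENNReal.ofReal ((1 - p) ^ (T - 1)) ≤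
      ATVw (fun x => (pathWeight c T x : ℝ)) (perturbedLaw d p T) (stepLaw d p T) := by
  have hsum : ∑ t ∈ Finset.Icc 1 (T - 1), (pathWeight c T (stepPath (t + 1) : Traj d T) : ℝ) =
      ∑ t ∈ Finset.Icc 1 (T - 1), ∏ s ∈ Finset.Icc (t + 1) T, (1 + (c s : ℝ)) :=
    Finset.sum_congr rfl fun t ht => by
      rw [pathWeight_stepPath (Nat.succ_le_succ (Finset.mem_Icc.1 ht).1)]
      push_cast
      rfl
  rw [← ENNReal.ofReal_mul' (pow_nonneg (unitInterval.one_minus_nonneg p) _), mul_comm]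
  have hbound := le_ATVw_perturbedLaw_stepLaw (d := d) hp0 hp1 hT
    (measurable_pathWeight (c := c) T).coe_nnreal_real fun _ => NNReal.coe_nonneg _
  rwa [hsum, pathWeight_stepPath_one hT, pathWeight_zero, NNReal.coe_zero, NNReal.coe_one,
    zero_add] at hbound

lemma exists_ofReal_mul_TVw_le_ATVw_pathWeight (d : ℕ) [NeZero d] (hT : 1 ≤ T) (c : ℕ → ℝ≥0)
    {ε : ℝ} (hε : 0 < ε) :
    ∃ p : unitInterval, p ≠ 0 ∧ p ≠ 1 ∧
      ENNReal.ofReal (1 + 2 * (∑ t ∈ Finset.Icc 1 (T - 1),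
          ∏ s ∈ Finset.Icc (t + 1) T, (1 + (c s : ℝ))) - ε) *
          TVw (fun x => (pathWeight c T x : ℝ)) (perturbedLaw d p T) (stepLaw d p T) ≤
        ATVw (fun x => (pathWeight c T x : ℝ)) (perturbedLaw d p T) (stepLaw d p T) := by
  set S := ∑ t ∈ Finset.Icc 1 (T - 1), ∏ s ∈ Finset.Icc (t + 1) T, (1 + (c s : ℝ))
  have hS : 0 ≤ S := by positivity
  obtain ⟨p, hp0, hp1, hpS⟩ := exists_unitInterval_sub_le_mul hS (half_pos hε)
  refine ⟨p, hp0, hp1, le_trans ?_ (le_ATVw_pathWeight hp0 hp1 hT c)⟩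
  rw [TVw_pathWeight hp0 hT]
  gcongr
  linarith

end Sharpness

theorem weighted_atv_tv_constant_sharp_general (d : ℕ) [NeZero d] (T : ℕ) (hT : 1 ≤ T)
    (c : ℕ → ℝ) (hc : ∀ t, 2 ≤ t → t ≤ T → 0 ≤ c t) (ε : ℝ) (hε : 0 < ε) :
    ∃ (w : Traj d T → ℝ) (w' : ∀ t : ℕ, Traj d t → ℝ)
      (μ ν : Measure (Traj d T)) (κ : ∀ t : ℕ, Traj d t → Measure (Fin d → ℝ)),
      Measurable w ∧ (∀ x, 0 ≤ w x) ∧ w' T = w ∧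
      (∀ t, Measurable (w' t)) ∧ (∀ t x, 0 ≤ w' t x) ∧
      IsProbabilityMeasure μ ∧ IsProbabilityMeasure ν ∧
      (∫⁻ x, ENNReal.ofReal (w x) ∂μ) + (∫⁻ x, ENNReal.ofReal (w x) ∂ν) < ⊤ ∧
      (∀ t, Measurable (κ t)) ∧ (∀ t x, IsProbabilityMeasure (κ t x)) ∧
      (∀ t, ∀ h : t + 1 ≤ T,
        ν.map (restr d h) =
          (ν.map (restr d (Nat.le_of_succ_le h))).bind (fun x => (κ t x).map (Fin.snoc x))) ∧
      (∀ᵐ x ∂ν, ∀ t, 1 ≤ t → ∀ h : t + 1 ≤ T,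
        w' t (restr d (Nat.le_of_succ_le h) x) ≤ w' (t + 1) (restr d h x)) ∧
      (∀ᵐ x ∂ν, ∀ t, 1 ≤ t → ∀ h : t + 1 ≤ T,
        (∫⁻ y, ENNReal.ofReal (w' (t + 1) (Fin.snoc (restr d (Nat.le_of_succ_le h) x) y))
            ∂(κ t (restr d (Nat.le_of_succ_le h) x)))
          ≤ ENNReal.ofReal ((1 + c (t + 1)) * w' t (restr d (Nat.le_of_succ_le h) x))) ∧
      0 < TVw w μ ν ∧ TVw w μ ν < ⊤ ∧
      ENNReal.ofReal
          (1 + 2 * (∑ t ∈ Finset.Icc 1 (T - 1), ∏ s ∈ Finset.Icc (t + 1) T, (1 + c s)) - ε)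
        * TVw w μ ν ≤ ATVw w μ ν := by
  set c' : ℕ → ℝ≥0 := fun s => (c s).toNNReal
  have hc' (s : ℕ) (hs : 2 ≤ s) (hsT : s ≤ T) : (c' s : ℝ) = c s :=
    Real.coe_toNNReal _ (hc s hs hsT)
  have hsum : ∑ t ∈ Finset.Icc 1 (T - 1), ∏ s ∈ Finset.Icc (t + 1) T, (1 + (c' s : ℝ)) =
      ∑ t ∈ Finset.Icc 1 (T - 1), ∏ s ∈ Finset.Icc (t + 1) T, (1 + c s) :=
    Finset.sum_congr rfl fun t ht => Finset.prod_congr rfl fun s hs => by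
      rw [Finset.mem_Icc] at ht hs
      rw [hc' s (by omega) hs.2]
  obtain ⟨p, hp0, hp1, hratio⟩ := exists_ofReal_mul_TVw_le_ATVw_pathWeight d hT c' hε
  obtain ⟨κ, hκ, hdis⟩ := exists_disintegration (stepLaw d p T)
  have hTV := TVw_pathWeight (d := d) hp0 hT c'
  refine ⟨fun x => pathWeight c' T x, fun t x => pathWeight c' t x, perturbedLaw d p T,
    stepLaw d p T, fun t => κ t, (measurable_pathWeight T).coe_nnreal_real,
    fun _ => NNReal.coe_nonneg _, rfl, fun t => (measurable_pathWeight t).coe_nnreal_real,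
    fun _ _ => NNReal.coe_nonneg _, inferInstance, inferInstance,
    ENNReal.add_lt_top.2 ⟨lintegral_pathWeight_lt_top _, lintegral_pathWeight_lt_top _⟩,
    fun t => (κ t).measurable, fun t => (hκ t).isProbabilityMeasure, hdis,
    ae_of_all _ fun x t ht h => NNReal.coe_le_coe.2 (pathWeight_restr_le ht (restr d h x)),
    ae_of_all _ fun x t ht h => ?_, ?_, hTV.trans_lt ENNReal.ofReal_lt_top, hsum ▸ hratio⟩
  · rw [← hc' (t + 1) (by omega) h]
    exact lintegral_pathWeight_snoc_le _ _
  · rw [hTV, ENNReal.ofReal_pos]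
    exact pow_pos (sub_pos.2 (unitInterval.coe_lt_one.2 (unitInterval.lt_one_iff_ne_one.2 hp1))) _

/-- Sharpness of the constant in the weighted bound: for every `T ≥ 1`,
constants `c_2, …, c_T ≥ 0` and `ε > 0`, there are a weighting function `w`, a weighting
sequence `(w_t)`, probability measures `μ, ν` and a disintegration `κ` of `ν`, satisfying the
conditional weighting assumption, with `0 < TV_w(μ,ν) < ∞` and
`ATV_w(μ,ν) ≥ (1 + 2 ∑_{t=1}^{T-1} ∏_{s=t+1}^{T}(1+c_s) - ε) TV_w(μ,ν)`. -/
theorem weighted_atv_tv_constant_sharp (T : ℕ) (hT : 1 ≤ T)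
    (c : ℕ → ℝ) (hc : ∀ t, 2 ≤ t → t ≤ T → 0 ≤ c t) (ε : ℝ) (hε : 0 < ε) :
    ∃ (w : Traj 1 T → ℝ) (w' : ∀ t : ℕ, Traj 1 t → ℝ)
      (μ ν : Measure (Traj 1 T)) (κ : ∀ t : ℕ, Traj 1 t → Measure (Fin 1 → ℝ)),
      Measurable w ∧ (∀ x, 0 ≤ w x) ∧ w' T = w ∧
      (∀ t, Measurable (w' t)) ∧ (∀ t x, 0 ≤ w' t x) ∧
      IsProbabilityMeasure μ ∧ IsProbabilityMeasure ν ∧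
      (∫⁻ x, ENNReal.ofReal (w x) ∂μ) + (∫⁻ x, ENNReal.ofReal (w x) ∂ν) < ⊤ ∧
      (∀ t, Measurable (κ t)) ∧ (∀ t x, IsProbabilityMeasure (κ t x)) ∧
      (∀ t, ∀ h : t + 1 ≤ T,
        ν.map (restr 1 h) =
          (ν.map (restr 1 (Nat.le_of_succ_le h))).bind (fun x => (κ t x).map (Fin.snoc x))) ∧
      (∀ᵐ x ∂ν, ∀ t, 1 ≤ t → ∀ h : t + 1 ≤ T,
        w' t (restr 1 (Nat.le_of_succ_le h) x) ≤ w' (t + 1) (restr 1 h x)) ∧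
      (∀ᵐ x ∂ν, ∀ t, 1 ≤ t → ∀ h : t + 1 ≤ T,
        (∫⁻ y, ENNReal.ofReal (w' (t + 1) (Fin.snoc (restr 1 (Nat.le_of_succ_le h) x) y))
            ∂(κ t (restr 1 (Nat.le_of_succ_le h) x)))
          ≤ ENNReal.ofReal ((1 + c (t + 1)) * w' t (restr 1 (Nat.le_of_succ_le h) x))) ∧
      0 < TVw w μ ν ∧ TVw w μ ν < ⊤ ∧
      ENNReal.ofReal
          (1 + 2 * (∑ t ∈ Finset.Icc 1 (T - 1), ∏ s ∈ Finset.Icc (t + 1) T, (1 + c s)) - ε)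
        * TVw w μ ν ≤ ATVw w μ ν :=
  weighted_atv_tv_constant_sharp_general 1 T hT c hc ε hε

end
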